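/- Let A be an N×N real symmetric positive definite matrix, let I ⊆ {1,…,N} be a set of indices, and let B = A restricted to I×I. Then for every x ∈ ℝᴺ, ∑_{i,j∈I} (B⁻¹)_{ij} x_i x_j ≤ ∑_{i,j=1}^N (A⁻¹)_{ij} x_i x_j. -/

import Mathlib

/-!
For positive definite `A` the form `x ⬝ A⁻¹ x` is the maximum over `v` of `2 (v ⬝ x) - v ⬝ A v`, and the
form of `B⁻¹` on the restricted vector is the same maximum over those `v` supported on `s`.
Concretely, let `v` be the extension by zero of `B⁻¹ x|ₛ`. Then `v ⬝ x` and `v ⬝ A v` both equal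
`x|ₛ ⬝ B⁻¹ x|ₛ`, and expanding `0 ≤ (A⁻¹ x - v) ⬝ A (A⁻¹ x - v)` gives the claim.
-/

open Matrix

/-- The variational lower bound for the quadratic form of `A⁻¹`. -/
lemma two_mul_dotProduct_sub_le {n : Type*} [Fintype n] [DecidableEq n]
    {A : Matrix n n ℝ} (hA : A.PosDef) (x v : n → ℝ) :
    2 * (v ⬝ᵥ x) - v ⬝ᵥ (A *ᵥ v) ≤ x ⬝ᵥ (A⁻¹ *ᵥ x) := by
  have hdet : IsUnit A.det := (isUnit_iff_isUnit_det A).1 hA.isUnit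
  have hAinv : A *ᵥ (A⁻¹ *ᵥ x) = x := by
    rw [mulVec_mulVec, mul_nonsing_inv A hdet, one_mulVec]
  have hT : Aᵀ = A := by simpa using hA.isHermitian.eq
  have hcross : (A⁻¹ *ᵥ x) ⬝ᵥ (A *ᵥ v) = v ⬝ᵥ x := by
    rw [dotProduct_mulVec, ← mulVec_transpose, hT, hAinv, dotProduct_comm]
  have h := hA.posSemidef.dotProduct_mulVec_nonneg (A⁻¹ *ᵥ x - v)
  simp only [star_trivial, mulVec_sub, hAinv, sub_dotProduct, dotProduct_sub, hcross] at h
  rw [dotProduct_comm (A⁻¹ *ᵥ x) x] at h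
  linarith

lemma sum_sum_eq_dotProduct {n : Type*} [Fintype n] (M : Matrix n n ℝ) (x : n → ℝ) :
    ∑ i, ∑ j, M i j * x i * x j = x ⬝ᵥ (M *ᵥ x) := by
  simp only [dotProduct, mulVec, Finset.mul_sum]
  exact Finset.sum_congr rfl fun i _ => Finset.sum_congr rfl fun j _ => by ring

theorem stmt4 (N : ℕ) (A : Matrix (Fin N) (Fin N) ℝ) (hA : A.PosDef)
    (s : Finset (Fin N)) (x : Fin N → ℝ) :
    ∑ i : {a // a ∈ s}, ∑ j : {a // a ∈ s},
        (A.submatrix ((↑) : {a // a ∈ s} → Fin N) ((↑) : {a // a ∈ s} → Fin N))⁻¹ i j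
          * x i * x j
      ≤ ∑ i, ∑ j, A⁻¹ i j * x i * x j := by
  set B := A.submatrix ((↑) : {a // a ∈ s} → Fin N) ((↑) : {a // a ∈ s} → Fin N) with hB
  have hBpos : B.PosDef := hA.submatrix Subtype.val_injective
  have hdet : IsUnit B.det := (isUnit_iff_isUnit_det B).1 hBpos.isUnit
  set y : {a // a ∈ s} → ℝ := fun i => x i with hy
  set z := B⁻¹ *ᵥ y with hz
  have hBz : B *ᵥ z = y := by
    rw [hz, mulVec_mulVec, mul_nonsing_inv B hdet, one_mulVec]
  -- The maximizer of the restricted problem, extended by zero outside `s`.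
  set v : Fin N → ℝ := fun a => if h : a ∈ s then z ⟨a, h⟩ else 0 with hv
  have hvs : ∀ i : {a // a ∈ s}, v i = z i := fun i => by simp [hv]
  have hsum : ∀ w : Fin N → ℝ, v ⬝ᵥ w = z ⬝ᵥ fun i : {a // a ∈ s} => w i := fun w => by
    simp only [dotProduct, ← hvs]
    rw [Finset.sum_coe_sort s (fun a => v a * w a)]
    refine (Finset.sum_subset (Finset.subset_univ s) fun a _ ha => ?_).symm
    simp [hv, ha]
  have hAv : (fun i : {a // a ∈ s} => (A *ᵥ v) i) = B *ᵥ z := by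
    funext i
    simp only [mulVec]
    rw [dotProduct_comm, hsum, dotProduct_comm]
    rfl
  have h := two_mul_dotProduct_sub_le hA x v
  rw [hsum x, hsum (A *ᵥ v), hAv, hBz] at h
  rw [sum_sum_eq_dotProduct A⁻¹ x]
  refine (sum_sum_eq_dotProduct B⁻¹ y).trans_le ?_
  rw [← hz, dotProduct_comm]
  linarith
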